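/- Let L₁ = {p ∈ ℝ³ : p₁ = 0 and p₂² + p₃²/4 = 1}, L₂ = {p ∈ ℝ³ : p₂ = 0 and p₃² + p₁²/4 = 1}, L₃ = {p ∈ ℝ³ : p₃ = 0 and p₁² + p₂²/4 = 1} be the three pairwise disjoint mutually orthogonal ellipses forming the standard Borromean rings, and set L = L₁ ∪ L₂ ∪ L₃. Then L is non-splittable: for every topological embedding f of the unit 2-sphere S² into ℝ³ whose image is disjoint from L, the set L is contained in a single connected component of ℝ³ \ f(S²). -/

import Mathlib

/-!
Write `K` for the embedded sphere. If `K` separated the rings, the complement of `K` would be the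
union of disjoint open sets `U` and `V`, one of them containing exactly one ring; by cyclic symmetry
that ring may be taken to be `L₁ ⊆ U`, with `L₂, L₃ ⊆ V`. The contradiction is a covering-space
argument showing that `L₁` represents a nontrivial commutator in the fundamental group of the
complement of the unlink `L₂ ∪ L₃`, carried out with circle-valued functions only.

* *Logarithms extend* (`exists_log_of_separating_sphere`). Let `A = U ∪ K`. Every continuous
  `φ : A → S¹` has a continuous logarithm. Indeed `φ` has one on `K`, because maps `S² → S¹` lift to
  `ℝ` (`exists_sphere_log`); by Tietze it extends to `ℝ³`, so that `φ` extends across `V ∪ K` to a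
  map `ℝ³ → S¹`, which lifts since `ℝ³` is simply connected. No tameness of `K` is needed.

* *Two circle-valued functions.* `α = collapse ∘ ringFun2` is defined off `L₂` and is `1` inside the
  ellipsoid `x²/4 + y²/4 + z² ≤ 1`; it winds around `L₂`. Likewise `β = collapse ∘ ringFun3` is
  defined off `L₃`, is `1` outside the ellipsoid `x² + y²/4 + z² < 1`, and winds around `L₃`. The
  second ellipsoid lies in the first, so at every point `α = 1` or `β = 1`.

* *The contradiction.* Let `s` be a logarithm of `α` on `A`, normalised to vanish at the point
  `(0, c, c)` of `L₁`. The function equal to `β` where `|s| < π` and to `1` elsewhere is continuous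
  on `A`, because `α = -1` and hence `β = 1` near `|s| = π`. Let `τ` be a logarithm of it. Running
  around `L₁`, the function `α` makes a full turn on the top arc, so `s = 0` on the right arc and
  `s = 2π` on the left one. Thus `τ` changes by `2π` on the right arc and is constant on the three
  others, which is impossible on a closed curve (`no_compatible_logs`).
-/

/-- The three ellipses forming the standard Borromean rings. -/
noncomputable def BorromeanL1 : Set (EuclideanSpace ℝ (Fin 3)) :=
  {p | p 0 = 0 ∧ (p 1) ^ 2 + (p 2) ^ 2 / 4 = 1}

noncomputable def BorromeanL2 : Set (EuclideanSpace ℝ (Fin 3)) :=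
  {p | p 1 = 0 ∧ (p 2) ^ 2 + (p 0) ^ 2 / 4 = 1}

noncomputable def BorromeanL3 : Set (EuclideanSpace ℝ (Fin 3)) :=
  {p | p 2 = 0 ∧ (p 0) ^ 2 + (p 1) ^ 2 / 4 = 1}

/-- The standard Borromean rings. -/
noncomputable def BorromeanRings : Set (EuclideanSpace ℝ (Fin 3)) :=
  BorromeanL1 ∪ BorromeanL2 ∪ BorromeanL3

open Set Metric Module

/-! ### Logarithms of circle-valued functions -/

/-- Maps from simply connected spaces to the circle lift through the covering `ℝ → S¹`. -/
theorem exists_circle_log {X : Type*} [TopologicalSpace X] [SimplyConnectedSpace X]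
    [LocallyPathConnectedSpace X] (φ : C(X, Circle)) :
    ∃ σ : C(X, ℝ), ∀ x, Circle.exp (σ x) = φ x := by
  obtain ⟨x₀⟩ : Nonempty X := inferInstance
  obtain ⟨σ, ⟨-, hσ⟩, -⟩ := Circle.isCoveringMap_exp.existsUnique_continuousMap_lifts φ x₀
    (Complex.arg (φ x₀)) (Circle.exp_arg _)
  exact ⟨σ, fun x => congrFun hσ x⟩

/-- A logarithm of the constant function `1` is constant on connected sets. -/
theorem eq_of_circle_exp_eq_one {X : Type*} [TopologicalSpace X] {S : Set X}
    (hS : IsPreconnected S) {σ : X → ℝ} (hσ : ContinuousOn σ S)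
    (h1 : ∀ x ∈ S, Circle.exp (σ x) = 1) {x y : X} (hx : x ∈ S) (hy : y ∈ S) :
    σ x = σ y := by
  have key : ∀ x ∈ S, ∀ y ∈ S, ¬ σ x < σ y := by
    intro x hx y hy hlt
    obtain ⟨m, hm⟩ := Circle.exp_eq_one.1 (h1 x hx)
    obtain ⟨n, hn⟩ := Circle.exp_eq_one.1 (h1 y hy)
    have hπ := Real.pi_pos
    have hmn : m + 1 ≤ n := by
      rw [hm, hn] at hlt
      have : (m : ℝ) < n := by nlinarith
      exact_mod_cast this
    have hmn' : (m : ℝ) + 1 ≤ n := by exact_mod_cast hmn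
    obtain ⟨z, hz, hzv⟩ := hS.intermediate_value hx hy hσ
      (show σ x + Real.pi ∈ Icc (σ x) (σ y) from ⟨by linarith, by rw [hm, hn]; nlinarith⟩)
    have := h1 z hz
    rw [hzv, Circle.exp_add, h1 x hx, one_mul] at this
    obtain ⟨k, hk⟩ := Circle.exp_eq_one.1 this
    have h2 : (1 : ℝ) = k * 2 := by nlinarith
    have h3 : (1 : ℤ) = k * 2 := by exact_mod_cast h2
    omega
  exact le_antisymm (not_lt.1 (key y hy x hx)) (not_lt.1 (key x hx y hy))

section
variable {E : Type*} [NormedAddCommGroup E] [InnerProductSpace ℝ E]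

/-- A circle-valued map has a logarithm on the sphere minus a point, which stereographic projection
identifies with a vector space. -/
theorem exists_log_compl_pole (φ : C(sphere (0 : E) 1, Circle)) (v : sphere (0 : E) 1) :
    ∃ g : sphere (0 : E) 1 → ℝ, ContinuousOn g {v}ᶜ ∧ ∀ x ≠ v, Circle.exp (g x) = φ x := by
  have hv : ‖(v : E)‖ = 1 := by simp
  have hopen := isOpenEmbedding_stereographic_symm hv
  obtain ⟨σ, hσ⟩ := exists_circle_log (φ.comp ⟨_, hopen.continuous⟩)
  have hsrc : (stereographic hv).source = {v}ᶜ := by simp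
  refine ⟨fun x => σ (stereographic hv x), ?_, fun x hx => ?_⟩
  · rw [← hsrc]
    exact σ.continuous.comp_continuousOn (stereographic hv).continuousOn
  · rw [hσ]
    have : x ∈ (stereographic hv).source := by rw [hsrc]; exact hx
    simp [(stereographic hv).left_inv this]

theorem isPreconnected_sphere_compl_poles (hE : finrank ℝ E = 3) (v : sphere (0 : E) 1) :
    IsPreconnected ({v}ᶜ ∩ {-v}ᶜ : Set (sphere (0 : E) 1)) := by
  have hv : ‖(v : E)‖ = 1 := by simp
  have hopen := isOpenEmbedding_stereographic_symm hv
  have hrank : 1 < Module.rank ℝ (ℝ ∙ (v : E))ᗮ := by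
    have : Fact (finrank ℝ E = 2 + 1) := ⟨hE⟩
    have hfin : finrank ℝ (ℝ ∙ (v : E))ᗮ = 2 :=
      Submodule.finrank_orthogonal_span_singleton (ne_zero_of_mem_unit_sphere v)
    have := Module.lt_rank_of_lt_finrank (R := ℝ) (M := (ℝ ∙ (v : E))ᗮ) (n := 1) (by omega)
    simpa using this
  have hpre := (isConnected_compl_singleton_of_one_lt_rank hrank 0).isPreconnected.image _
    hopen.continuous.continuousOn
  convert hpre using 1
  have hsrc : (stereographic hv).source = {v}ᶜ := by simp
  have hz : stereographic hv (-v) = 0 := stereographic_apply_neg v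
  ext x
  constructor
  · rintro ⟨h1, h2⟩
    have hx : x ∈ (stereographic hv).source := by rw [hsrc]; exact h1
    refine ⟨stereographic hv x, ?_, (stereographic hv).left_inv hx⟩
    intro h0
    have hn : -v ∈ (stereographic hv).source := by
      rw [hsrc]; exact (ne_neg_of_mem_unit_sphere ℝ v).symm
    exact h2 ((stereographic hv).injOn hx hn (h0.trans hz.symm))
  · rintro ⟨y, hy, rfl⟩
    have hmem := (stereographic hv).map_target (x := y) (by simp)
    have hinv := (stereographic hv).right_inv (x := y) (by simp)
    refine ⟨by rw [hsrc] at hmem; exact hmem, fun h => hy ?_⟩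
    rw [← hinv, show (stereographic hv).symm y = -v from h, hz]
    rfl

/-- Every map from the two-sphere to the circle has a continuous logarithm: logarithms on the
complements of two antipodal points differ by a constant on the connected overlap. -/
theorem exists_sphere_log (hE : finrank ℝ E = 3) (φ : C(sphere (0 : E) 1, Circle)) :
    ∃ σ : C(sphere (0 : E) 1, ℝ), ∀ x, Circle.exp (σ x) = φ x := by
  classical
  rcases isEmpty_or_nonempty (sphere (0 : E) 1) with hemp | ⟨⟨v⟩⟩
  · exact ⟨0, fun x => hemp.elim x⟩
  have hne : v ≠ -v := ne_neg_of_mem_unit_sphere ℝ v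
  obtain ⟨g, hg, hgφ⟩ := exists_log_compl_pole φ v
  obtain ⟨h, hh, hhφ⟩ := exists_log_compl_pole φ (-v)
  have hconst : ∃ k, Circle.exp k = 1 ∧ ∀ x ∈ ({v}ᶜ ∩ {-v}ᶜ : Set (sphere (0 : E) 1)),
      g x = h x + k := by
    have hone : ∀ x ∈ ({v}ᶜ ∩ {-v}ᶜ : Set (sphere (0 : E) 1)),
        Circle.exp ((g - h) x) = 1 := by
      rintro x ⟨h1, h2⟩
      simp [Circle.exp_sub, hgφ x h1, hhφ x h2]
    rcases ({v}ᶜ ∩ {-v}ᶜ : Set (sphere (0 : E) 1)).eq_empty_or_nonempty with he | ⟨x₀, hx₀⟩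
    · exact ⟨0, by simp, by simp [he]⟩
    · refine ⟨g x₀ - h x₀, hone x₀ hx₀, fun x hx => ?_⟩
      have := eq_of_circle_exp_eq_one (isPreconnected_sphere_compl_poles hE v)
        ((hg.mono inter_subset_left).sub (hh.mono inter_subset_right)) hone hx hx₀
      simp only [Pi.sub_apply] at this
      linarith
  obtain ⟨k, hk, hgh⟩ := hconst
  let σ : sphere (0 : E) 1 → ℝ := fun x => if x = v then h x + k else g x
  have hσ1 : ∀ x ∈ ({v}ᶜ : Set (sphere (0 : E) 1)), σ x = g x := fun x hx => if_neg hx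
  have hσ2 : ∀ x ∈ ({-v}ᶜ : Set (sphere (0 : E) 1)), σ x = h x + k := by
    intro x hx
    by_cases hxv : x = v
    · exact if_pos hxv
    · rw [hσ1 x hxv, hgh x ⟨hxv, hx⟩]
  have hcont : Continuous σ := by
    rw [continuous_iff_continuousAt]
    intro x
    by_cases hxv : x = v
    · have hx : x ∈ ({-v}ᶜ : Set (sphere (0 : E) 1)) := by rw [hxv]; exact hne
      exact (((hh.add continuousOn_const).congr hσ2).continuousAt
        (isOpen_compl_singleton.mem_nhds hx))
    · exact (hg.congr hσ1).continuousAt (isOpen_compl_singleton.mem_nhds hxv)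
  refine ⟨⟨σ, hcont⟩, fun x => ?_⟩
  change Circle.exp (σ x) = φ x
  by_cases hxv : x = v
  · have hx : x ∈ ({-v}ᶜ : Set (sphere (0 : E) 1)) := by rw [hxv]; exact hne
    rw [hσ2 x hx, Circle.exp_add, hk, mul_one, hhφ x hx]
  · rw [hσ1 x hxv, hgφ x hxv]

/-- If `A` and `B` are closed, cover the space and meet in an embedded sphere, then a circle-valued
function on `A` has a logarithm there, since it extends to the whole space. -/
theorem exists_log_of_separating_sphere (hE : finrank ℝ E = 3)
    {f : sphere (0 : E) 1 → E} (hf : Topology.IsClosedEmbedding f) {A B : Set E}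
    (hA : IsClosed A) (hB : IsClosed B) (hAB : A ∪ B = univ) (hK : A ∩ B = range f)
    {φ : E → Circle} (hφ : ContinuousOn φ A) :
    ∃ σ : E → ℝ, Continuous σ ∧ ∀ p ∈ A, Circle.exp (σ p) = φ p := by
  classical
  have hfA : ∀ x, f x ∈ A := fun x => (hK.symm ▸ mem_range_self x : f x ∈ A ∩ B).1
  obtain ⟨σ, hσ⟩ := exists_sphere_log hE ⟨φ ∘ f, hφ.comp_continuous hf.continuous hfA⟩
  obtain ⟨τ, hτ⟩ := σ.exists_extension' hf
  have hagree : ∀ p ∈ A ∩ B, φ p = Circle.exp (τ p) := by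
    rw [hK]
    rintro _ ⟨x, rfl⟩
    rw [show τ (f x) = σ x from congrFun hτ x, hσ]
    rfl
  let ψ : E → Circle := fun p => if p ∈ A then φ p else Circle.exp (τ p)
  have hψA : ∀ p ∈ A, ψ p = φ p := fun p hp => if_pos hp
  have hψB : ∀ p ∈ B, ψ p = Circle.exp (τ p) := by
    intro p hp
    by_cases hpA : p ∈ A
    · rw [hψA p hpA, hagree p ⟨hpA, hp⟩]
    · exact if_neg hpA
  have hψ : Continuous ψ := by
    rw [← continuousOn_univ, ← hAB]
    exact (hφ.congr hψA).union_of_isClosed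
      ((Circle.exp.continuous.comp τ.continuous).continuousOn.congr hψB) hA hB
  obtain ⟨ρ, hρ⟩ := exists_circle_log ⟨ψ, hψ⟩
  exact ⟨ρ, ρ.continuous, fun p hp => (hρ p).trans (hψA p hp)⟩
end

/-! ### Collapsing the punctured plane onto the circle -/

/-- The map `ℂ \ {0} → S¹` of degree one that sends the closed right half plane to `1` and spreads
the left half plane around the whole circle: there it is `w ↦ -(w / |w|)²`. Its value at `0` is
irrelevant. -/
noncomputable def collapse (w : ℂ) : Circle :=
  if w.re ≤ 0 then Circle.exp (Real.pi + 2 * Complex.arg (-w)) else 1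

theorem collapse_of_re_nonpos {w : ℂ} (h : w.re ≤ 0) :
    collapse w = Circle.exp (Real.pi + 2 * Complex.arg (-w)) := if_pos h

theorem exp_arg_of_re_eq_zero {w : ℂ} (h0 : w ≠ 0) (h : w.re = 0) :
    Circle.exp (Real.pi + 2 * Complex.arg (-w)) = 1 := by
  have him : w.im ≠ 0 := fun hi => h0 (Complex.ext h hi)
  rcases lt_or_gt_of_ne him with hi | hi
  · have : Complex.arg (-w) = Real.pi / 2 := by
      rw [Complex.arg_eq_pi_div_two_iff]; simp [h, hi]
    rw [this, show Real.pi + 2 * (Real.pi / 2) = 2 * Real.pi by ring, Circle.exp_two_pi]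
  · have : Complex.arg (-w) = -(Real.pi / 2) := by
      rw [Complex.arg_eq_neg_pi_div_two_iff]; simp [h, hi]
    rw [this, show Real.pi + 2 * (-(Real.pi / 2)) = 0 by ring, Circle.exp_zero]

theorem collapse_of_re_nonneg {w : ℂ} (h0 : w ≠ 0) (h : 0 ≤ w.re) : collapse w = 1 := by
  rcases h.eq_or_lt with h | h
  · rw [collapse_of_re_nonpos h.symm.le, exp_arg_of_re_eq_zero h0 h.symm]
  · exact if_neg (not_le.2 h)

theorem neg_mem_slitPlane {w : ℂ} (h0 : w ≠ 0) (h : w.re ≤ 0) : -w ∈ Complex.slitPlane := by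
  rw [Complex.mem_slitPlane_iff]
  rcases h.lt_or_eq with h | h
  · left; simpa using h
  · right; simpa using fun hi => h0 (Complex.ext h hi)

theorem continuousOn_collapse : ContinuousOn collapse {0}ᶜ := by
  refine ContinuousOn.if ?_ ?_ continuousOn_const
  · rintro w ⟨h0, hw⟩
    exact exp_arg_of_re_eq_zero h0 (frontier_le_subset_eq Complex.continuous_re continuous_const hw)
  · rintro w ⟨h0, hw⟩
    rw [(isClosed_le Complex.continuous_re continuous_const).closure_eq] at hw
    have harg : ContinuousAt (fun w => Complex.arg (-w)) w :=
      (Complex.continuousAt_arg (neg_mem_slitPlane h0 hw)).comp continuous_neg.continuousAt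
    exact (Circle.exp.continuous.continuousAt.comp
      (continuousAt_const.add (continuousAt_const.mul harg))).continuousWithinAt

/-- A path in the left half plane from the negative to the positive imaginary axis is mapped by
`collapse` to a full negative turn of the circle. -/
theorem log_collapse_arc {c : ℝ} (hc : 0 < c) {w : ℝ → ℂ} {σ : ℝ → ℝ} (hw : Continuous w)
    (hσ : Continuous σ) (hre : ∀ t ∈ Icc (-c) c, (w t).re ≤ 0) (h0 : ∀ t ∈ Icc (-c) c, w t ≠ 0)
    (hlog : ∀ t ∈ Icc (-c) c, Circle.exp (σ t) = collapse (w t))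
    (hl : (w (-c)).re = 0) (hl' : (w (-c)).im < 0) (hr : (w c).re = 0) (hr' : 0 < (w c).im) :
    σ (-c) = σ c + 2 * Real.pi := by
  have harg : ContinuousOn (fun t => Complex.arg (-w t)) (Icc (-c) c) := fun t ht =>
    ContinuousAt.comp_continuousWithinAt (g := Complex.arg) (f := fun t => -w t)
      (Complex.continuousAt_arg (neg_mem_slitPlane (h0 t ht) (hre t ht)))
      hw.neg.continuousWithinAt
  have h := eq_of_circle_exp_eq_one (σ := fun t => σ t - (Real.pi + 2 * Complex.arg (-w t)))
    isPreconnected_Icc (hσ.continuousOn.sub (continuousOn_const.add (continuousOn_const.mul harg)))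
    (fun t ht => by rw [Circle.exp_sub, hlog t ht, collapse_of_re_nonpos (hre t ht), div_self'])
    (left_mem_Icc.2 (by linarith : -c ≤ c)) (right_mem_Icc.2 (by linarith : -c ≤ c))
  have e1 : Complex.arg (-w (-c)) = Real.pi / 2 := by
    rw [Complex.arg_eq_pi_div_two_iff]; simp [hl, hl']
  have e2 : Complex.arg (-w c) = -(Real.pi / 2) := by
    rw [Complex.arg_eq_neg_pi_div_two_iff]; simp [hr, hr']
  simp only [e1, e2] at h
  linarith

/-! ### The functions attached to the second and third ring -/

local notation "ℝ³" => EuclideanSpace ℝ (Fin 3)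

/-- A complex-valued function vanishing exactly on `L₂`. Its real part is negative exactly outside
the ellipsoid `x²/4 + y²/4 + z² ≤ 1`. -/
noncomputable def ringFun2 (p : ℝ³) : ℂ := ⟨1 - (p 0 ^ 2 / 4 + p 1 ^ 2 / 4 + p 2 ^ 2), p 1⟩

/-- A complex-valued function vanishing exactly on `L₃`. Its real part is negative exactly inside
the ellipsoid `x² + y²/4 + z² < 1`. -/
noncomputable def ringFun3 (p : ℝ³) : ℂ := ⟨p 0 ^ 2 + p 1 ^ 2 / 4 + p 2 ^ 2 - 1, p 2⟩

theorem continuous_mk {X : Type*} [TopologicalSpace X] {a b : X → ℝ} (ha : Continuous a)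
    (hb : Continuous b) : Continuous fun x => (⟨a x, b x⟩ : ℂ) := by
  have : (fun x => (⟨a x, b x⟩ : ℂ)) = fun x => (a x : ℂ) + b x * Complex.I := by
    ext x; exact Complex.mk_eq_add_mul_I _ _
  rw [this]
  fun_prop

theorem continuous_ringFun2 : Continuous ringFun2 := continuous_mk (by fun_prop) (by fun_prop)

theorem continuous_ringFun3 : Continuous ringFun3 := continuous_mk (by fun_prop) (by fun_prop)

theorem ringFun2_ne_zero {p : ℝ³} (hp : p ∉ BorromeanL2) : ringFun2 p ≠ 0 := by
  intro h
  have h1 : 1 - (p 0 ^ 2 / 4 + p 1 ^ 2 / 4 + p 2 ^ 2) = 0 := congrArg Complex.re h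
  have h2 : p 1 = 0 := congrArg Complex.im h
  refine hp ⟨h2, ?_⟩
  rw [h2] at h1
  linarith

theorem ringFun3_ne_zero {p : ℝ³} (hp : p ∉ BorromeanL3) : ringFun3 p ≠ 0 := by
  intro h
  have h1 : p 0 ^ 2 + p 1 ^ 2 / 4 + p 2 ^ 2 - 1 = 0 := congrArg Complex.re h
  have h2 : p 2 = 0 := congrArg Complex.im h
  refine hp ⟨h2, ?_⟩
  rw [h2] at h1
  linarith

/-- At every point one of the two circle-valued functions is `1`, because
`re (ringFun2 p) + re (ringFun3 p) = 3 x² / 4 ≥ 0`. -/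
theorem collapse_ringFun3_eq_one {p : ℝ³} (h2 : p ∉ BorromeanL2) (h3 : p ∉ BorromeanL3)
    (h : collapse (ringFun2 p) ≠ 1) : collapse (ringFun3 p) = 1 := by
  have hlt : (ringFun2 p).re < 0 := not_le.1 fun hle => h (collapse_of_re_nonneg (ringFun2_ne_zero h2) hle)
  refine collapse_of_re_nonneg (ringFun3_ne_zero h3) ?_
  simp only [ringFun2, ringFun3] at hlt ⊢
  nlinarith [sq_nonneg (p 0)]

theorem continuous_vec {X : Type*} [TopologicalSpace X] {a b : X → ℝ} (ha : Continuous a)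
    (hb : Continuous b) : Continuous fun x => (!₂[0, a x, b x] : ℝ³) := by
  refine (PiLp.continuous_toLp 2 _).comp (continuous_pi fun i => ?_)
  fin_cases i
  · exact continuous_const
  · exact ha
  · exact hb

theorem mem_L1 {y z : ℝ} (h : y ^ 2 + z ^ 2 / 4 = 1) : (!₂[0, y, z] : ℝ³) ∈ BorromeanL1 :=
  ⟨rfl, h⟩

/-! ### Winding along the first ring -/

theorem notMem_L2_of_mem_L1 {p : ℝ³} (h : p ∈ BorromeanL1) : p ∉ BorromeanL2 := by
  rintro ⟨h1, h2⟩
  obtain ⟨h3, h4⟩ := h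
  rw [h1] at h4
  rw [h3] at h2
  linarith

theorem notMem_L3_of_mem_L1 {p : ℝ³} (h : p ∈ BorromeanL1) : p ∉ BorromeanL3 := by
  rintro ⟨h1, h2⟩
  obtain ⟨h3, h4⟩ := h
  rw [h1] at h4
  rw [h3] at h2
  linarith

/-- On `L₁` the two real parts are opposite; they change sign at the points `(0, ±c, ±c)` with
`c² = 4/5`. -/
theorem re_of_sq_two_le {p : ℝ³} (h : p ∈ BorromeanL1) (hp : p 2 ^ 2 ≤ 4 / 5) :
    (ringFun3 p).re ≤ 0 ∧ 0 ≤ (ringFun2 p).re := by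
  obtain ⟨h0, h1⟩ := h
  simp only [ringFun2, ringFun3, h0]
  constructor <;> linarith

theorem re_of_sq_one_le {p : ℝ³} (h : p ∈ BorromeanL1) (hp : p 1 ^ 2 ≤ 4 / 5) :
    (ringFun2 p).re ≤ 0 ∧ 0 ≤ (ringFun3 p).re := by
  obtain ⟨h0, h1⟩ := h
  simp only [ringFun2, ringFun3, h0]
  constructor <;> linarith

/-- A logarithm `s` of `α = collapse ∘ ringFun2` along `L₁` and a logarithm `τ` of the function equal
to `collapse ∘ ringFun3` on the sheet `|s| < π` and to `1` elsewhere cannot coexist: going around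
`L₁`, the function `τ` would change by `2π`. The constant `c` is `2 / √5`. -/
theorem no_compatible_logs {s τ : ℝ³ → ℝ} (hs : Continuous s) (hτ : Continuous τ)
    (hs1 : ∀ p ∈ BorromeanL1, Circle.exp (s p) = collapse (ringFun2 p))
    {c : ℝ} (hc : 0 < c) (hc2 : c ^ 2 = 4 / 5) (hs0 : s !₂[0, c, c] = 0)
    (hτ1 : ∀ p ∈ BorromeanL1, Circle.exp (τ p) = if |s p| < Real.pi then collapse (ringFun3 p) else 1) :
    False := by
  have hπ := Real.pi_pos
  have hcc : -c ≤ c := by linarith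
  have hleft : -c ∈ Icc (-c) c := left_mem_Icc.2 hcc
  have hright : c ∈ Icc (-c) c := right_mem_Icc.2 hcc
  have hsq : ∀ t ∈ Icc (-c) c, t ^ 2 ≤ 4 / 5 := fun t ht => by
    rw [← hc2]; exact sq_le_sq' ht.1 ht.2
  -- `V ε` and `H ε` parametrise the arcs of the ellipse between the four points `(0, ±c, ±c)`.
  let V : ℝ → ℝ → ℝ³ := fun ε t => !₂[0, ε * √(1 - t ^ 2 / 4), t]
  let H : ℝ → ℝ → ℝ³ := fun ε t => !₂[0, t, ε * (2 * √(1 - t ^ 2))]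
  have hVc : ∀ ε, Continuous (V ε) := fun ε => continuous_vec (by fun_prop) (by fun_prop)
  have hHc : ∀ ε, Continuous (H ε) := fun ε => continuous_vec (by fun_prop) (by fun_prop)
  have hVL : ∀ ε, ε ^ 2 = 1 → ∀ t ∈ Icc (-c) c, V ε t ∈ BorromeanL1 := fun ε hε t ht =>
    mem_L1 (by rw [mul_pow, hε, Real.sq_sqrt (by linarith [hsq t ht])]; ring)
  have hHL : ∀ ε, ε ^ 2 = 1 → ∀ t ∈ Icc (-c) c, H ε t ∈ BorromeanL1 := fun ε hε t ht =>
    mem_L1 (by rw [mul_pow, mul_pow, hε, Real.sq_sqrt (by linarith [hsq t ht])]; ring)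
  have hroot1 : √(1 - c ^ 2 / 4) = c := by
    rw [show (1 : ℝ) - c ^ 2 / 4 = c ^ 2 by linarith, Real.sqrt_sq hc.le]
  have hroot2 : 2 * √(1 - c ^ 2) = c := by
    rw [show (1 : ℝ) - c ^ 2 = (c / 2) ^ 2 by linarith, Real.sqrt_sq (by linarith)]; ring
  have hV1 : ∀ ε, V ε c = !₂[0, ε * c, c] := fun ε => by simp only [V, hroot1]
  have hV2 : ∀ ε, V ε (-c) = !₂[0, ε * c, -c] := fun ε => by simp only [V, neg_sq, hroot1]
  have hH1 : ∀ ε, H ε c = !₂[0, c, ε * c] := fun ε => by simp only [H, hroot2]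
  have hH2 : ∀ ε, H ε (-c) = !₂[0, -c, ε * c] := fun ε => by simp only [H, neg_sq, hroot2]
  -- Where one of the two circle-valued functions is `1`, its logarithm is constant.
  have hsV : ∀ ε, ε ^ 2 = 1 → ∀ t ∈ Icc (-c) c, s (V ε t) = s (V ε c) := fun ε hε t ht =>
    eq_of_circle_exp_eq_one isPreconnected_Icc (hs.comp (hVc ε)).continuousOn
      (fun t ht => by
        have hL := hVL ε hε t ht
        exact (hs1 _ hL).trans (collapse_of_re_nonneg (ringFun2_ne_zero (notMem_L2_of_mem_L1 hL))
          (re_of_sq_two_le hL (hsq t ht)).2)) ht hright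
  have hτH : ∀ ε, ε ^ 2 = 1 → τ (H ε (-c)) = τ (H ε c) := fun ε hε =>
    eq_of_circle_exp_eq_one isPreconnected_Icc (hτ.comp (hHc ε)).continuousOn
      (fun t ht => by
        have hL := hHL ε hε t ht
        refine (hτ1 _ hL).trans ?_
        rw [collapse_of_re_nonneg (ringFun3_ne_zero (notMem_L3_of_mem_L1 hL))
          (re_of_sq_one_le hL (hsq t ht)).2, ite_self]) hleft hright
  have e1 : (1 : ℝ) ^ 2 = 1 := by norm_num
  have e2 : (-1 : ℝ) ^ 2 = 1 := by norm_num
  -- Along the top arc the first logarithm gains `2π`.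
  have htop : s (H 1 (-c)) = s (H 1 c) + 2 * Real.pi := by
    refine log_collapse_arc hc (w := fun t => ringFun2 (H 1 t)) (σ := fun t => s (H 1 t))
      (continuous_ringFun2.comp (hHc 1)) (hs.comp (hHc 1))
      (fun t ht => (re_of_sq_one_le (hHL 1 e1 t ht) (hsq t ht)).1)
      (fun t ht => ringFun2_ne_zero (notMem_L2_of_mem_L1 (hHL 1 e1 t ht)))
      (fun t ht => hs1 _ (hHL 1 e1 t ht)) ?_ ?_ ?_ ?_
    · rw [hH2]; simp [ringFun2]; linarith
    · rw [hH2]; simpa [ringFun2] using hc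
    · rw [hH1]; simp [ringFun2]; linarith
    · rw [hH1]; simpa [ringFun2] using hc
  have hs0' : s (V 1 c) = 0 := by rw [hV1, one_mul, hs0]
  have hsleft : s (V (-1) c) = 2 * Real.pi := by
    rw [hH2, hH1, one_mul, hs0] at htop
    rw [hV1, neg_one_mul, htop, zero_add]
  -- Hence the second logarithm is constant on the left arc ...
  have hτleft : τ (V (-1) (-c)) = τ (V (-1) c) :=
    eq_of_circle_exp_eq_one isPreconnected_Icc (hτ.comp (hVc (-1))).continuousOn
      (fun t ht => by
        refine (hτ1 _ (hVL _ e2 t ht)).trans (if_neg ?_)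
        rw [hsV _ e2 t ht, hsleft, abs_of_pos (by linarith)]
        linarith) hleft hright
  -- ... while it changes by `2π` along the right arc.
  have hτright : τ (V 1 (-c)) = τ (V 1 c) + 2 * Real.pi := by
    refine log_collapse_arc hc (w := fun t => ringFun3 (V 1 t)) (σ := fun t => τ (V 1 t))
      (continuous_ringFun3.comp (hVc 1)) (hτ.comp (hVc 1))
      (fun t ht => (re_of_sq_two_le (hVL 1 e1 t ht) (hsq t ht)).1)
      (fun t ht => ringFun3_ne_zero (notMem_L3_of_mem_L1 (hVL 1 e1 t ht)))
      (fun t ht => ?_) ?_ ?_ ?_ ?_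
    · refine (hτ1 _ (hVL 1 e1 t ht)).trans (if_pos ?_)
      rw [hsV 1 e1 t ht, hs0', abs_zero]
      exact hπ
    · rw [hV2]; simp [ringFun3]; linarith
    · rw [hV2]; simpa [ringFun3] using hc
    · rw [hV1]; simp [ringFun3]; linarith
    · rw [hV1]; simpa [ringFun3] using hc
  have ht1 := hτH 1 e1
  have ht2 := hτH (-1) e2
  simp only [hV1, hV2, hH1, hH2, one_mul, neg_one_mul] at ht1 ht2 hτleft hτright
  linarith

/-! ### No sphere isolates a ring -/

theorem L1_not_isolated {f : Metric.sphere (0 : ℝ³) 1 → ℝ³} (hf : Topology.IsEmbedding f)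
    {U V : Set ℝ³} (hU : IsOpen U) (hV : IsOpen V) (hUV : Disjoint U V)
    (hcover : U ∪ V = (range f)ᶜ) (h1 : BorromeanL1 ⊆ U) (h2 : BorromeanL2 ⊆ V)
    (h3 : BorromeanL3 ⊆ V) : False := by
  have hE : finrank ℝ ℝ³ = 3 := by simp
  have hfc : Topology.IsClosedEmbedding f := ⟨hf, (isCompact_range hf.continuous).isClosed⟩
  have hAB : Vᶜ ∪ Uᶜ = univ := by
    rw [← compl_inter, inter_comm, hUV.inter_eq, compl_empty]
  have hK : Vᶜ ∩ Uᶜ = range f := by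
    rw [← compl_union, union_comm, hcover, compl_compl]
  have hA2 : ∀ p ∈ Vᶜ, p ∉ BorromeanL2 := fun p hp h => hp (h2 h)
  have hA3 : ∀ p ∈ Vᶜ, p ∉ BorromeanL3 := fun p hp h => hp (h3 h)
  have h1A : BorromeanL1 ⊆ Vᶜ := h1.trans hUV.subset_compl_right
  have hα : ContinuousOn (fun p => collapse (ringFun2 p)) Vᶜ :=
    continuousOn_collapse.comp continuous_ringFun2.continuousOn fun p hp => ringFun2_ne_zero (hA2 p hp)
  have hβ : ContinuousOn (fun p => collapse (ringFun3 p)) Vᶜ :=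
    continuousOn_collapse.comp continuous_ringFun3.continuousOn fun p hp => ringFun3_ne_zero (hA3 p hp)
  obtain ⟨s₀, hs₀, hs₀'⟩ := exists_log_of_separating_sphere hE hfc hV.isClosed_compl
    hU.isClosed_compl hAB hK hα
  obtain ⟨c, hc, hc2⟩ : ∃ c : ℝ, 0 < c ∧ c ^ 2 = 4 / 5 :=
    ⟨√(4 / 5), by positivity, Real.sq_sqrt (by norm_num)⟩
  have hP : (!₂[0, c, c] : ℝ³) ∈ BorromeanL1 := mem_L1 (by linarith)
  have hP1 : Circle.exp (s₀ !₂[0, c, c]) = 1 := by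
    rw [hs₀' _ (h1A hP)]
    exact collapse_of_re_nonneg (ringFun2_ne_zero (notMem_L2_of_mem_L1 hP))
      (re_of_sq_two_le hP hc2.le).2
  -- Normalise the logarithm to vanish at the base point `(0, c, c)` of the ellipse.
  let s : ℝ³ → ℝ := fun p => s₀ p - s₀ !₂[0, c, c]
  have hs : Continuous s := hs₀.sub continuous_const
  have hs' : ∀ p ∈ Vᶜ, Circle.exp (s p) = collapse (ringFun2 p) := fun p hp => by
    rw [Circle.exp_sub, hP1, div_one, hs₀' p hp]
  have hγ : ContinuousOn (fun p => if |s p| < Real.pi then collapse (ringFun3 p) else 1) Vᶜ := by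
    refine ContinuousOn.if ?_ (hβ.mono inter_subset_left) continuousOn_const
    rintro p ⟨hp, hfr⟩
    have habs : |s p| = Real.pi := frontier_lt_subset_eq hs.abs continuous_const hfr
    refine collapse_ringFun3_eq_one (hA2 p hp) (hA3 p hp) ?_
    rw [← hs' p hp]
    intro h
    obtain ⟨n, hn⟩ := Circle.exp_eq_one.1 h
    rw [hn, abs_mul, abs_of_pos Real.two_pi_pos] at habs
    have hn' : |(n : ℝ)| * 2 = 1 := by nlinarith [Real.pi_pos]
    have hn'' : |n| * 2 = 1 := by exact_mod_cast hn'
    omega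
  obtain ⟨τ, hτ, hτ'⟩ := exists_log_of_separating_sphere hE hfc hV.isClosed_compl
    hU.isClosed_compl hAB hK hγ
  exact no_compatible_logs hs hτ (fun p hp => hs' p (h1A hp)) hc hc2 (sub_self _)
    fun p hp => hτ' p (h1A hp)

/-- The cyclic permutation `(x, y, z) ↦ (y, z, x)` of the coordinates, a symmetry of the rings. -/
noncomputable def rotate : ℝ³ ≃ₜ ℝ³ :=
  (LinearIsometryEquiv.piLpCongrLeft 2 ℝ ℝ (finRotate 3).symm).toHomeomorph

theorem rotate_apply (p : ℝ³) (i : Fin 3) : rotate p i = p (finRotate 3 i) := rfl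

theorem rotate_mem_L1 {p : ℝ³} : rotate p ∈ BorromeanL1 ↔ p ∈ BorromeanL2 := Iff.rfl

theorem rotate_mem_L2 {p : ℝ³} : rotate p ∈ BorromeanL2 ↔ p ∈ BorromeanL3 := Iff.rfl

theorem rotate_mem_L3 {p : ℝ³} : rotate p ∈ BorromeanL3 ↔ p ∈ BorromeanL1 := Iff.rfl

theorem L2_not_isolated {f : Metric.sphere (0 : ℝ³) 1 → ℝ³} (hf : Topology.IsEmbedding f)
    {U V : Set ℝ³} (hU : IsOpen U) (hV : IsOpen V) (hUV : Disjoint U V)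
    (hcover : U ∪ V = (range f)ᶜ) (h2 : BorromeanL2 ⊆ U) (h3 : BorromeanL3 ⊆ V)
    (h1 : BorromeanL1 ⊆ V) : False := by
  refine L1_not_isolated (rotate.isEmbedding.comp hf) (U := rotate.symm ⁻¹' U)
    (V := rotate.symm ⁻¹' V) (hU.preimage rotate.symm.continuous)
    (hV.preimage rotate.symm.continuous) (hUV.preimage _) ?_ ?_ ?_ ?_
  · rw [← preimage_union, hcover, range_comp, preimage_compl, rotate.image_eq_preimage_symm]
  · exact fun p hp => h2 (rotate_mem_L1.1 (by simpa using hp))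
  · exact fun p hp => h3 (rotate_mem_L2.1 (by simpa using hp))
  · exact fun p hp => h1 (rotate_mem_L3.1 (by simpa using hp))

theorem L3_not_isolated {f : Metric.sphere (0 : ℝ³) 1 → ℝ³} (hf : Topology.IsEmbedding f)
    {U V : Set ℝ³} (hU : IsOpen U) (hV : IsOpen V) (hUV : Disjoint U V)
    (hcover : U ∪ V = (range f)ᶜ) (h3 : BorromeanL3 ⊆ U) (h1 : BorromeanL1 ⊆ V)
    (h2 : BorromeanL2 ⊆ V) : False := by
  refine L2_not_isolated (rotate.isEmbedding.comp hf) (U := rotate.symm ⁻¹' U)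
    (V := rotate.symm ⁻¹' V) (hU.preimage rotate.symm.continuous)
    (hV.preimage rotate.symm.continuous) (hUV.preimage _) ?_ ?_ ?_ ?_
  · rw [← preimage_union, hcover, range_comp, preimage_compl, rotate.image_eq_preimage_symm]
  · exact fun p hp => h3 (rotate_mem_L2.1 (by simpa using hp))
  · exact fun p hp => h1 (rotate_mem_L3.1 (by simpa using hp))
  · exact fun p hp => h2 (rotate_mem_L1.1 (by simpa using hp))

/-! ### Conclusion -/

theorem isPreconnected_L1 : IsPreconnected BorromeanL1 := by
  have hc : Continuous fun t : ℝ => (!₂[0, Real.cos t, 2 * Real.sin t] : ℝ³) :=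
    continuous_vec (by fun_prop) (by fun_prop)
  convert isPreconnected_range hc using 1
  ext p
  constructor
  · rintro ⟨h0, h1⟩
    have hn : ‖(⟨p 1, p 2 / 2⟩ : ℂ)‖ = 1 := by
      rw [Complex.norm_eq_sqrt_sq_add_sq, Real.sqrt_eq_one]
      linarith
    have hre := Complex.norm_mul_cos_arg (⟨p 1, p 2 / 2⟩ : ℂ)
    have him := Complex.norm_mul_sin_arg (⟨p 1, p 2 / 2⟩ : ℂ)
    rw [hn, one_mul] at hre him
    refine ⟨Complex.arg ⟨p 1, p 2 / 2⟩, ?_⟩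
    ext i
    fin_cases i
    · exact h0.symm
    · exact hre
    · change 2 * Real.sin _ = p 2
      rw [him]
      ring
  · rintro ⟨t, rfl⟩
    exact mem_L1 (by nlinarith [Real.sin_sq_add_cos_sq t])

theorem isPreconnected_L2 : IsPreconnected BorromeanL2 :=
  rotate.isPreconnected_preimage.2 isPreconnected_L1

theorem isPreconnected_L3 : IsPreconnected BorromeanL3 :=
  rotate.isPreconnected_preimage.2 isPreconnected_L2

/-- The Borromean rings are non-splittable: for every topological embedding of the unit
2-sphere into ℝ³ whose image is disjoint from the rings, the rings lie in a single
connected component of the complement of the embedded sphere. -/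
theorem borromean_rings_nonsplittable
    (f : (Metric.sphere (0 : EuclideanSpace ℝ (Fin 3)) 1) → EuclideanSpace ℝ (Fin 3))
    (hf : Topology.IsEmbedding f)
    (hdisj : Disjoint (Set.range f) BorromeanRings) :
    ∃ x : EuclideanSpace ℝ (Fin 3),
      BorromeanRings ⊆ connectedComponentIn (Set.range f)ᶜ x := by
  have hsub : BorromeanRings ⊆ (range f)ᶜ := hdisj.subset_compl_left
  have hs1 : BorromeanL1 ⊆ (range f)ᶜ := fun p hp => hsub (Or.inl (Or.inl hp))
  have hs2 : BorromeanL2 ⊆ (range f)ᶜ := fun p hp => hsub (Or.inl (Or.inr hp))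
  have hs3 : BorromeanL3 ⊆ (range f)ᶜ := fun p hp => hsub (Or.inr hp)
  have hO : IsOpen (range f)ᶜ := (isCompact_range hf.continuous).isClosed.isOpen_compl
  have hx : (!₂[0, 1, 0] : ℝ³) ∈ BorromeanL1 := mem_L1 (by norm_num)
  set x : ℝ³ := !₂[0, 1, 0]
  set U := connectedComponentIn (range f)ᶜ x with hUdef
  have hUO : IsOpen U := hO.connectedComponentIn
  have hUsub : U ⊆ (range f)ᶜ := connectedComponentIn_subset _ _
  -- The union of the other components.
  have hVO : IsOpen ((range f)ᶜ \ U) := by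
    rw [isOpen_iff_mem_nhds]
    rintro y ⟨hy, hyU⟩
    refine Filter.mem_of_superset (hO.connectedComponentIn.mem_nhds (mem_connectedComponentIn hy))
      fun z hz => ⟨connectedComponentIn_subset _ _ hz, fun hzU => hyU ?_⟩
    rw [hUdef, connectedComponentIn_eq hzU, ← connectedComponentIn_eq hz]
    exact mem_connectedComponentIn hy
  have hdis : Disjoint U ((range f)ᶜ \ U) := disjoint_sdiff_right
  have hcov : U ∪ ((range f)ᶜ \ U) = (range f)ᶜ := union_sdiff_cancel hUsub
  have hcov' : ((range f)ᶜ \ U) ∪ U = (range f)ᶜ := by rw [union_comm, hcov]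
  have hdich : ∀ S : Set ℝ³, IsPreconnected S → S ⊆ (range f)ᶜ →
      S ⊆ U ∨ S ⊆ (range f)ᶜ \ U := by
    intro S hS hSK
    by_cases h : ∃ y ∈ S, y ∈ U
    · obtain ⟨y, hyS, hyU⟩ := h
      left
      rw [hUdef, connectedComponentIn_eq hyU]
      exact hS.subset_connectedComponentIn hyS hSK
    · exact Or.inr fun y hy => ⟨hSK hy, fun hyU => h ⟨y, hy, hyU⟩⟩
  have h1 : BorromeanL1 ⊆ U := isPreconnected_L1.subset_connectedComponentIn hx hs1
  refine ⟨x, ?_⟩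
  rcases hdich _ isPreconnected_L2 hs2 with h2 | h2 <;>
    rcases hdich _ isPreconnected_L3 hs3 with h3 | h3
  · exact union_subset (union_subset h1 h2) h3
  · exact (L3_not_isolated hf hVO hUO hdis.symm hcov' h3 h1 h2).elim
  · exact (L2_not_isolated hf hVO hUO hdis.symm hcov' h2 h3 h1).elim
  · exact (L1_not_isolated hf hUO hVO hdis hcov h1 h2 h3).elim
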